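/- Let Ω ⊆ Q be a closed axis-parallel cube with positive volume. Then for all sufficiently large n, for every minimizer Y_n of the quantization energy among subsets of Q with n points, the number of generators y ∈ Y_n whose Voronoi cell intersects the boundary ∂Ω is at most (6Γ₄/(ω₃·Γ₅³))·n^{2/3}, where Γ₄ := (2·12^{1/4}·16^{1/3}/(π^{1/4}·ω₃^{1/12}))·(√(1 + 2⁴·3³/(5²·10³)) − 1)^{−1/2}·(5²·10³/(2²·3³))^{1/4}, Γ₅ := (1/4)·(√(1 + 2⁴·3³/(5²·10³)) − 1)·Γ₃, Γ₃ := ω₃^{−1/5}·Γ₁^{1/5}, Γ₁ := (2/5)^{2/3}/40. -/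

import Mathlib

open MeasureTheory

noncomputable section

/-- Euclidean 3-space. -/
abbrev E3 := EuclideanSpace ℝ (Fin 3)

/-- The closed unit cube Q = [0,1]³. -/
def Qcube : Set E3 := {x | ∀ i, x i ∈ Set.Icc (0 : ℝ) 1}

/-- The quantization energy E(Y) = ∫_Q dist(x,Y)² dx. -/
def quantE (Y : Finset E3) : ℝ := ∫ x in Qcube, (Metric.infDist x (↑Y : Set E3)) ^ 2

/-- The Voronoi cell of a generator y ∈ Y, relative to Q. -/
def vorCell (Y : Finset E3) (y : E3) : Set E3 :=
  {x ∈ Qcube | ∀ z ∈ Y, dist x y ≤ dist x z}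

/-- Y is a minimizer of the quantization energy among n-point subsets of Q. -/
def IsMinimizer (n : ℕ) (Y : Finset E3) : Prop :=
  (↑Y : Set E3) ⊆ Qcube ∧ Y.card = n ∧
    ∀ Z : Finset E3, (↑Z : Set E3) ⊆ Qcube → Z.card = n → quantE Y ≤ quantE Z

/-- ω₃ = 4π/3, the volume of the unit ball in ℝ³. -/
def omega3 : ℝ := 4 * Real.pi / 3

/-- Γ₁ = (2/5)^{2/3} / 40. -/
def Gamma1 : ℝ := ((2 / 5 : ℝ) ^ ((2 : ℝ) / 3)) / 40

/-- Γ₃ = ω₃^{-1/5} Γ₁^{1/5}. -/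
def Gamma3 : ℝ := omega3 ^ (-(1 : ℝ) / 5) * Gamma1 ^ ((1 : ℝ) / 5)

/-- Γ₅ = (1/4)(√(1 + 2⁴·3³/(5²·10³)) − 1) Γ₃. -/
def Gamma5 : ℝ :=
  (1 / 4) * (Real.sqrt (1 + (2 ^ 4 * 3 ^ 3 : ℝ) / (5 ^ 2 * 10 ^ 3)) - 1) * Gamma3

/-- Γ₄, the diameter upper-bound constant. -/
def Gamma4 : ℝ :=
  (2 * (12 : ℝ) ^ ((1 : ℝ) / 4) * (16 : ℝ) ^ ((1 : ℝ) / 3) /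
      (Real.pi ^ ((1 : ℝ) / 4) * omega3 ^ ((1 : ℝ) / 12))) *
    (Real.sqrt (1 + (2 ^ 4 * 3 ^ 3 : ℝ) / (5 ^ 2 * 10 ^ 3)) - 1) ^ (-(1 : ℝ) / 2) *
    ((5 ^ 2 * 10 ^ 3 : ℝ) / (2 ^ 2 * 3 ^ 3)) ^ ((1 : ℝ) / 4)

def boxS (l u : Fin 3 → ℝ) : Set E3 := {x | ∀ i, x i ∈ Set.Icc (l i) (u i)}

lemma boxS_eq (l u : Fin 3 → ℝ) :
    boxS l u = (MeasurableEquiv.toLp 2 (Fin 3 → ℝ)).symm ⁻¹' (Set.Icc l u) := by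
  ext x
  simp only [boxS, Set.mem_ofPred_eq, Set.mem_preimage, Set.mem_Icc, Pi.le_def]
  constructor
  · intro h; exact ⟨fun i => (h i).1, fun i => (h i).2⟩
  · intro h i; exact ⟨h.1 i, h.2 i⟩

lemma boxS_meas (l u : Fin 3 → ℝ) : MeasurableSet (boxS l u) := by
  rw [boxS_eq]
  exact (MeasurableEquiv.toLp 2 (Fin 3 → ℝ)).symm.measurable measurableSet_Icc

lemma boxS_vol (l u : Fin 3 → ℝ) (h : l ≤ u) :
    volume.real (boxS l u) = ∏ i, (u i - l i) := by
  rw [boxS_eq, measureReal_def,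
    (EuclideanSpace.volume_preserving_symm_measurableEquiv_toLp (Fin 3)).measure_preimage
      measurableSet_Icc.nullMeasurableSet, Real.volume_Icc_pi_toReal h]

lemma boxS_fin (l u : Fin 3 → ℝ) : volume (boxS l u) ≠ ⊤ := by
  rw [boxS_eq, 
    (EuclideanSpace.volume_preserving_symm_measurableEquiv_toLp (Fin 3)).measure_preimage
      measurableSet_Icc.nullMeasurableSet]
  exact isCompact_Icc.measure_ne_top

lemma Q_eq : Qcube = boxS 0 1 := rfl

lemma Q_vol : volume.real Qcube = 1 := by
  rw [Q_eq, boxS_vol _ _ zero_le_one]; simp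

lemma Q_meas : MeasurableSet Qcube := by rw [Q_eq]; exact boxS_meas _ _

lemma Q_fin : volume Qcube ≠ ⊤ := by rw [Q_eq]; exact boxS_fin _ _

lemma dist_sq3 (x y : E3) : dist x y ^ 2 = (x 0 - y 0)^2 + (x 1 - y 1)^2 + (x 2 - y 2)^2 := by
  rw [EuclideanSpace.dist_eq, Real.sq_sqrt (by positivity)]
  simp [Fin.sum_univ_three, Real.dist_eq, sq_abs]

lemma dist_sq_le (x y : E3) (e : ℝ) (h : ∀ i, |x i - y i| ≤ e) : dist x y ^ 2 ≤ 3 * e ^ 2 := by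
  rw [dist_sq3]
  have := fun i => sq_le_sq' (abs_le.mp (h i)).1 (abs_le.mp (h i)).2
  linarith [this 0, this 1, this 2]

lemma coord_le (x y : E3) (i : Fin 3) : |x i - y i| ≤ dist x y := by
  apply abs_le_of_sq_le_sq _ dist_nonneg
  rw [dist_sq3]
  fin_cases i <;> simp <;> nlinarith [sq_nonneg (x 0 - y 0), sq_nonneg (x 1 - y 1), sq_nonneg (x 2 - y 2)]

lemma Q_dist {x y : E3} (hx : x ∈ Qcube) (hy : y ∈ Qcube) : dist x y ≤ 2 := by
  have h := dist_sq_le x y 1 (fun i => by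
    have := hx i; have := hy i
    simp only [Set.mem_Icc] at *
    rw [abs_le]; constructor <;> linarith)
  nlinarith [dist_nonneg (x := x) (y := y)]

/-- distance function -/
abbrev dd (W : Finset E3) (x : E3) : ℝ := Metric.infDist x (↑W : Set E3)

lemma dd_nonneg (W : Finset E3) (x : E3) : 0 ≤ dd W x := Metric.infDist_nonneg

lemma dd_le {W : Finset E3} {w : E3} (x : E3) (hw : w ∈ W) : dd W x ≤ dist x w :=
  Metric.infDist_le_dist_of_mem (by exact_mod_cast hw)

lemma dd_att {W : Finset E3} (hW : W.Nonempty) (x : E3) : ∃ w ∈ W, dd W x = dist x w := by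
  obtain ⟨w, hw, h⟩ := (W.finite_toSet.isCompact).exists_infDist_eq_dist (by exact_mod_cast hW) x
  exact ⟨w, by exact_mod_cast hw, h⟩

lemma dd_anti {V W : Finset E3} (hV : V.Nonempty) (h : V ⊆ W) (x : E3) : dd W x ≤ dd V x := by
  obtain ⟨v, hv, e⟩ := dd_att hV x
  rw [e]; exact dd_le x (h hv)

lemma dd_int (W : Finset E3) : IntegrableOn (fun x => dd W x ^ 2) Qcube := by
  have hc : Continuous (fun x : E3 => dd W x ^ 2) :=
    (Metric.continuous_infDist_pt _).pow 2
  have hb : Bornology.IsBounded Qcube := by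
    rw [Metric.isBounded_iff]; exact ⟨2, fun x hx y hy => Q_dist hx hy⟩
  exact (hc.continuousOn.integrableOn_compact (hb.isCompact_closure)).mono_set subset_closure

lemma quantE_anti {V W : Finset E3} (hV : V.Nonempty) (h : V ⊆ W) : quantE W ≤ quantE V := by
  apply setIntegral_mono (dd_int W) (dd_int V)
  intro x
  exact pow_le_pow_left₀ (dd_nonneg _ _) (dd_anti hV h x) 2

lemma gain {W : Finset E3} (hW : W.Nonempty) {z : E3} (hz : z ∈ Qcube) {δ : ℝ} (h0 : 0 ≤ δ)
    (h2 : δ ≤ 2) (hd : δ ≤ dd W z) : quantE (insert z W) + δ ^ 5 / 1024 ≤ quantE W := by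
  set l : Fin 3 → ℝ := fun i => if z i ≤ 1/2 then z i else z i - δ/8 with hl
  set u : Fin 3 → ℝ := fun i => l i + δ/8 with hu
  have hlu : l ≤ u := fun i => by simp only [hu]; linarith
  have hB : boxS l u ⊆ Qcube := by
    intro x hx i
    have h1 := hx i
    have h3 := hz i
    simp only [hu, hl, Set.mem_Icc] at h1 h3 ⊢
    split_ifs at h1 <;> constructor <;> linarith
  have hvol : volume.real (boxS l u) = (δ/8)^3 := by
    rw [boxS_vol _ _ hlu]; simp [hu]; ring
  have hi : IntegrableOn ((boxS l u).indicator (fun _ => δ^2/2)) Qcube := by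
    apply IntegrableOn.indicator _ (boxS_meas _ _)
    exact integrableOn_const (hs := Q_fin)
  have hI : ∫ x in Qcube, (boxS l u).indicator (fun _ => δ^2/2) x = δ^5/1024 := by
    rw [setIntegral_indicator (boxS_meas _ _), Set.inter_eq_right.mpr hB, setIntegral_const, hvol]
    simp only [smul_eq_mul]; ring
  rw [← hI]
  unfold quantE
  rw [← integral_add (dd_int _) hi]
  apply setIntegral_mono ((dd_int _).add hi) (dd_int W)
  intro x
  simp only [Pi.add_apply]
  by_cases hx : x ∈ boxS l u
  · rw [Set.indicator_of_mem hx]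
    have ht : dist x z ^ 2 ≤ 3 * (δ/8)^2 := by
      apply dist_sq_le
      intro i
      have h1 := hx i
      simp only [hu, hl, Set.mem_Icc] at h1
      rw [abs_le]
      split_ifs at h1 <;> constructor <;> linarith
    have ht' : dist x z ≤ δ / 4 := by
      apply abs_le_of_sq_le_sq' _ (by linarith) |>.2
      nlinarith [sq_nonneg δ]
    have ha : dd (insert z W) x ≤ dist x z := dd_le x (Finset.mem_insert_self _ _)
    have hb : dd W z ≤ dd W x + dist z x := Metric.infDist_le_infDist_add_dist
    rw [dist_comm z x] at hb
    have h3 := pow_le_pow_left₀ (dd_nonneg _ _) ha 2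
    have h4 := pow_le_pow_left₀ (by linarith : 0 ≤ δ - dist x z) (by linarith : δ - dist x z ≤ dd W x) 2
    change dd (insert z W) x ^ 2 + _ ≤ dd W x ^ 2
    nlinarith
  · rw [Set.indicator_of_notMem hx, add_zero]
    exact pow_le_pow_left₀ (dd_nonneg _ _) (dd_anti hW (Finset.subset_insert _ _) x) 2

lemma erase_ne {n : ℕ} {Y : Finset E3} (hn : 2 ≤ n) (hc : Y.card = n) {y : E3} (hy : y ∈ Y) :
    (Y.erase y).Nonempty := by
  rw [← Finset.card_pos, Finset.card_erase_of_mem hy]; omega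

lemma swap {n : ℕ} {Y : Finset E3} (hY : IsMinimizer n Y) (hn : 2 ≤ n) {y : E3} (hy : y ∈ Y)
    {z : E3} (hz : z ∈ Qcube) {δ : ℝ} (h0 : 0 < δ) (h2 : δ ≤ 2) (hd : δ ≤ dd Y z) :
    quantE Y + δ ^ 5 / 1024 ≤ quantE (Y.erase y) := by
  have hne := erase_ne hn hY.2.1 hy
  have hzY : z ∉ Y := by
    intro h
    have := dd_le z h
    simp at this
    linarith
  have hg := gain hne hz h0.le h2 (hd.trans (dd_anti hne (Finset.erase_subset _ _) z))
  have hm := hY.2.2 (insert z (Y.erase y)) (by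
    intro x hx
    simp only [Finset.coe_insert, Set.mem_insert_iff, Finset.mem_coe] at hx
    rcases hx with rfl | hx
    · exact hz
    · exact hY.1 (Finset.mem_of_mem_erase hx)) (by
    rw [Finset.card_insert_of_notMem (fun h => hzY (Finset.mem_of_mem_erase h)),
      Finset.card_erase_of_mem hy, hY.2.1]; omega)
  linarith

/-- at most one generator matters -/
lemma phi_zero {Y : Finset E3} {x y0 y : E3} (h0 : y0 ∈ Y) (hx : dd Y x = dist x y0)
    (hne : y ≠ y0) : dd (Y.erase y) x = dd Y x := by
  have h1 : y0 ∈ Y.erase y := Finset.mem_erase.mpr ⟨hne.symm, h0⟩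
  apply le_antisymm
  · rw [hx]; exact dd_le x h1
  · exact dd_anti ⟨y0, h1⟩ (Finset.erase_subset _ _) x

lemma phi_sum {Y T : Finset E3} {x : E3} (hY : Y.Nonempty) (F : ℝ) (hF : 0 ≤ F)
    (hb : ∀ y ∈ T, dd Y x = dist x y → dd (Y.erase y) x ^ 2 - dd Y x ^ 2 ≤ F) :
    ∑ y ∈ T, (dd (Y.erase y) x ^ 2 - dd Y x ^ 2) ≤ F := by
  obtain ⟨y0, h0, hx⟩ := dd_att hY x
  by_cases hT : y0 ∈ T
  · rw [Finset.sum_eq_single_of_mem y0 hT]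
    · exact hb y0 hT hx
    · intro b _ hne; rw [phi_zero h0 hx hne, sub_self]
  · rw [Finset.sum_eq_zero]
    · exact hF
    · intro b hbT
      rw [phi_zero h0 hx (fun h => hT (h ▸ hbT)), sub_self]

lemma cost_sum (Y T : Finset E3) :
    ∑ y ∈ T, (quantE (Y.erase y) - quantE Y) =
      ∫ x in Qcube, ∑ y ∈ T, (dd (Y.erase y) x ^ 2 - dd Y x ^ 2) := by
  rw [integral_finsetSum]
  · apply Finset.sum_congr rfl
    intro y _
    rw [integral_sub (dd_int _) (dd_int _)]; rfl
  · intro y _; exact (dd_int _).sub (dd_int _)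

lemma cost_int (Y T : Finset E3) :
    IntegrableOn (fun x => ∑ y ∈ T, (dd (Y.erase y) x ^ 2 - dd Y x ^ 2)) Qcube :=
  integrable_finsetSum _ (fun _ _ => (dd_int _).sub (dd_int _))

lemma far_pt {y : E3} (hy : y ∈ Qcube) {r : ℝ} (h0 : 0 ≤ r) (hr : r ≤ 1/2) :
    ∃ w ∈ Qcube, dist w y = r := by
  obtain ⟨s, hs, h0, h1⟩ : ∃ s : ℝ, |s| = r ∧ 0 ≤ y 0 + s ∧ y 0 + s ≤ 1 := by
    have := hy 0
    simp only [Set.mem_Icc] at this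
    by_cases h : y 0 ≤ 1/2
    · exact ⟨r, abs_of_nonneg h0, by linarith, by linarith⟩
    · exact ⟨-r, by rw [abs_neg, abs_of_nonneg h0], by linarith, by linarith⟩
  refine ⟨y + EuclideanSpace.single 0 s, ?_, ?_⟩
  · intro i
    have := hy i
    fin_cases i <;> simp_all
  · rw [dist_eq_norm]; simp [hs]

lemma slab {n : ℕ} {Y S : Finset E3} (hY : IsMinimizer n Y) (hn : 2 ≤ n) {R g c : ℝ} {i : Fin 3}
    (hR0 : 0 < R) (hR : R ≤ 1/4) (hcov : ∀ x ∈ Qcube, dd Y x ≤ R) (hSY : S ⊆ Y)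
    (hg : ∀ y ∈ Y, quantE Y + g ≤ quantE (Y.erase y))
    (hS : ∀ y ∈ S, |y i - c| ≤ R) : S.card * g ≤ 64 * R ^ 3 := by
  have hne : Y.Nonempty := by rw [← Finset.card_pos, hY.2.1]; omega
  set l : Fin 3 → ℝ := Function.update 0 i (c - 2 * R) with hl
  set u : Fin 3 → ℝ := Function.update 1 i (c + 2 * R) with hu
  have hlu : l ≤ u := by
    intro j
    by_cases h : j = i
    · subst h; simp [hl, hu]; linarith
    · simp [hl, hu, h]
  have hvol : volume.real (boxS l u) = 4 * R := by
    rw [boxS_vol _ _ hlu, Finset.prod_eq_single i]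
    · simp [hl, hu]; ring
    · intro j _ h; simp [hl, hu, h]
    · simp
  have hi : IntegrableOn ((boxS l u).indicator (fun _ => 16 * R^2)) Qcube := by
    apply IntegrableOn.indicator _ (boxS_meas _ _)
    exact integrableOn_const (hs := Q_fin)
  have h1 : S.card * g ≤ ∑ y ∈ S, (quantE (Y.erase y) - quantE Y) := by
    rw [← nsmul_eq_mul]
    apply Finset.card_nsmul_le_sum
    intro y hy
    linarith [hg y (hSY hy)]
  have h2 : ∑ y ∈ S, (quantE (Y.erase y) - quantE Y) ≤
      ∫ x in Qcube, (boxS l u).indicator (fun _ => 16 * R^2) x := by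
    rw [cost_sum]
    apply setIntegral_mono_on (cost_int _ _) hi Q_meas
    intro x hx
    apply phi_sum hne
    · apply Set.indicator_nonneg; intros; positivity
    · intro y hyS hxy
      have hyx : dist x y ≤ R := hxy ▸ hcov x hx
      have hyQ : y ∈ Qcube := hY.1 (hSY hyS)
      have hxb : x ∈ boxS l u := by
        intro j
        by_cases h : j = i
        · subst h
          have a1 := abs_le.mp (hS y hyS)
          have a2 := abs_le.mp ((coord_le x y j).trans hyx)
          simp only [hl, hu, Function.update_self, Set.mem_Icc]
          constructor <;> linarith [a1.1, a1.2, a2.1, a2.2]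
        · have := hx j
          simpa [hl, hu, h] using this
      rw [Set.indicator_of_mem hxb]
      obtain ⟨w, hw, hwy⟩ := far_pt hyQ (by linarith : 0 ≤ 2 * R) (by linarith)
      obtain ⟨v, hv, hvw⟩ := dd_att hne w
      have hwv : dist w v ≤ R := hvw ▸ hcov w hw
      have hvy : v ≠ y := by
        rintro rfl; linarith
      have hv' : v ∈ Y.erase y := Finset.mem_erase.mpr ⟨hvy, hv⟩
      have : dd (Y.erase y) x ≤ 4 * R := by
        refine (dd_le x hv').trans ?_
        have t1 := dist_triangle x y v
        have t2 := dist_triangle y w v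
        rw [dist_comm y w] at t2
        linarith
      have := pow_le_pow_left₀ (dd_nonneg _ _) this 2
      nlinarith [sq_nonneg (dd Y x)]
  have h3 : ∫ x in Qcube, (boxS l u).indicator (fun _ => 16 * R^2) x ≤ 64 * R^3 := by
    rw [setIntegral_indicator (boxS_meas _ _), setIntegral_const, smul_eq_mul]
    have : volume.real (Qcube ∩ boxS l u) ≤ 4 * R := by
      rw [← hvol]
      exact measureReal_mono Set.inter_subset_right (boxS_fin _ _)
    nlinarith [mul_le_mul_of_nonneg_right this (by positivity : 0 ≤ 16 * R^2)]
  linarith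

def gidx (m : ℕ) (x : E3) : Fin 3 → Fin (m + 1) := fun j => Fin.ofNat (m + 1) ⌊(m : ℝ) * x j⌋₊

lemma gidx_spec {m : ℕ} (hm : 0 < m) {x : E3} (hx : x ∈ Qcube) (j : Fin 3) :
    0 ≤ x j - ((gidx m x j : ℕ) : ℝ) / m ∧ x j - ((gidx m x j : ℕ) : ℝ) / m ≤ 1 / m := by
  have h := hx j
  simp only [Set.mem_Icc] at h
  have hm' : (0 : ℝ) < m := by exact_mod_cast hm
  have h1 : (0 : ℝ) ≤ m * x j := mul_nonneg hm'.le h.1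
  have h2 : ⌊(m : ℝ) * x j⌋₊ < m + 1 := by
    rw [Nat.floor_lt h1]; push_cast; nlinarith
  have h3 : (gidx m x j : ℕ) = ⌊(m : ℝ) * x j⌋₊ := by
    simp [gidx, Fin.ofNat, Nat.mod_eq_of_lt h2]
  rw [h3]
  have h4 := Nat.floor_le h1
  have h5 := Nat.lt_floor_add_one ((m : ℝ) * x j)
  constructor
  · rw [sub_nonneg, div_le_iff₀ hm']; linarith
  · rw [sub_le_iff_le_add, ← add_div, le_div_iff₀ hm']; linarith

lemma gidx_dist {m : ℕ} (hm : 0 < m) {x y : E3} (hx : x ∈ Qcube) (hy : y ∈ Qcube)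
    (h : gidx m x = gidx m y) : dist x y ^ 2 ≤ 3 * (1 / (m : ℝ)) ^ 2 := by
  apply dist_sq_le
  intro j
  have h1 := gidx_spec hm hx j
  have h2 := gidx_spec hm hy j
  rw [h] at h1
  rw [abs_le]; constructor <;> linarith [h1.1, h1.2, h2.1, h2.2]

def gpt (m : ℕ) (k : Fin 3 → Fin (m + 1)) : E3 := WithLp.toLp 2 (fun j => ((k j : ℕ) : ℝ) / m)

lemma gpt_Q {m : ℕ} (hm : 0 < m) (k : Fin 3 → Fin (m + 1)) : gpt m k ∈ Qcube := by
  intro j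
  have hm' : (0 : ℝ) < m := by exact_mod_cast hm
  have : ((k j : ℕ) : ℝ) ≤ m := by exact_mod_cast Nat.lt_succ_iff.mp (k j).2
  simp only [gpt, Set.mem_Icc]
  exact ⟨by positivity, by rw [div_le_one hm']; exact this⟩

lemma gpt_dist {m : ℕ} (hm : 0 < m) {x : E3} (hx : x ∈ Qcube) :
    dist x (gpt m (gidx m x)) ^ 2 ≤ 3 * (1 / (m : ℝ)) ^ 2 := by
  apply dist_sq_le
  intro j
  have h1 := gidx_spec hm hx j
  simp only [gpt]
  rw [abs_le]; constructor <;> linarith [h1.1, h1.2]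

lemma quantE_le {W : Finset E3} {e : ℝ} (h : ∀ x ∈ Qcube, dd W x ^ 2 ≤ e) : quantE W ≤ e := by
  have : quantE W ≤ ∫ x in Qcube, e :=
    setIntegral_mono_on (dd_int W) (integrableOn_const (hs := Q_fin)) Q_meas h
  rwa [setIntegral_const, Q_vol, one_smul] at this

lemma Q_inf : Qcube.Infinite := by
  intro hf
  have : volume Qcube = 0 := hf.measure_zero _
  have h2 := Q_vol
  rw [measureReal_def, this] at h2
  simp at h2

lemma card_fun (m : ℕ) : Fintype.card (Fin 3 → Fin (m + 1)) = (m + 1) ^ 3 := by simp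

open Classical in
lemma energy_le {n m : ℕ} (hm : 0 < m) (hn : (m + 1) ^ 3 ≤ n) {Y : Finset E3}
    (hY : IsMinimizer n Y) : quantE Y ≤ 3 * (1 / (m : ℝ)) ^ 2 := by
  set G : Finset E3 := Finset.univ.image (gpt m) with hG
  have hGc : G.card ≤ n := (Finset.card_image_le.trans (by simp)).trans hn
  have hGQ : (G : Set E3) ⊆ Qcube := by
    intro x hx
    simp only [hG, Finset.coe_image, Set.mem_image] at hx
    obtain ⟨k, -, rfl⟩ := hx
    exact gpt_Q hm k
  obtain ⟨A, hAQ, hAc⟩ := (Q_inf.sdiff G.finite_toSet).exists_subset_card_eq (n - G.card)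
  have hd : Disjoint G A := by
    rw [Finset.disjoint_left]; intro x hx hxA; exact (hAQ hxA).2 hx
  have h1 := hY.2.2 (G ∪ A) (by
    rw [Finset.coe_union]; exact Set.union_subset hGQ (hAQ.trans Set.sdiff_subset)) (by
    rw [Finset.card_union_of_disjoint hd, hAc]; omega)
  refine h1.trans ((quantE_anti ⟨gpt m 0, ?_⟩ Finset.subset_union_left).trans (quantE_le (W := G) ?_))
  · simp [hG]
  · intro x hx
    refine (pow_le_pow_left₀ (dd_nonneg _ _) (dd_le x ?_) 2).trans (gpt_dist hm hx)
    simp [hG]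

open Classical in
lemma cheap {n m : ℕ} (hm : 0 < m) (hn : 2 * (m + 1) ^ 3 ≤ n) {Y : Finset E3}
    (hY : IsMinimizer n Y) : ∃ y ∈ Y, quantE (Y.erase y) - quantE Y ≤ 18 / (n * (m : ℝ) ^ 2) := by
  have hm' : (0 : ℝ) < m := by exact_mod_cast hm
  have hp : 0 < (m + 1) ^ 3 := by positivity
  have hn0 : (0 : ℝ) < n := by exact_mod_cast (by omega : 0 < n)
  have hne : Y.Nonempty := by rw [← Finset.card_pos, hY.2.1]; omega
  set f := gidx m
  set g := Function.invFunOn f (Y : Set E3)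
  set Z := (Y.image f).image g with hZ
  have hgm : ∀ y ∈ Y, g (f y) ∈ Y ∧ f (g (f y)) = f y := by
    intro y hy
    have he : ∃ a ∈ (Y : Set E3), f a = f y := ⟨y, hy, rfl⟩
    exact ⟨by exact_mod_cast Function.invFunOn_mem he, Function.invFunOn_eq he⟩
  have hZY : Z ⊆ Y := by
    intro z hz
    simp only [hZ, Finset.mem_image, exists_exists_and_eq_and] at hz
    obtain ⟨y, hy, rfl⟩ := hz
    exact (hgm y hy).1
  have hZm : ∀ y ∈ Y, g (f y) ∈ Z := fun y hy =>
    Finset.mem_image_of_mem _ (Finset.mem_image_of_mem _ hy)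
  have hZne : Z.Nonempty := by
    obtain ⟨y, hy⟩ := hne
    exact ⟨_, hZm y hy⟩
  have hZc : Z.card ≤ (m + 1) ^ 3 := by
    rw [← card_fun]
    exact Finset.card_image_le.trans (Finset.card_le_univ _)
  have hT : (n : ℝ) ≤ 2 * (Y \ Z).card := by
    have : (Y \ Z).card = n - Z.card := by rw [Finset.card_sdiff_of_subset hZY, hY.2.1]
    exact_mod_cast (by omega : n ≤ 2 * (Y \ Z).card)
  have hE := energy_le hm (by omega) hY
  have hZE : quantE Z ≤ 2 * quantE Y + 6 * (1 / (m : ℝ)) ^ 2 := by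
    have : 2 * quantE Y + 6 * (1 / (m : ℝ)) ^ 2 =
        ∫ x in Qcube, (2 * dd Y x ^ 2 + 6 * (1 / (m : ℝ)) ^ 2) := by
      rw [integral_add ((dd_int Y).const_mul 2) (integrableOn_const (hs := Q_fin)),
        setIntegral_const, Q_vol, one_smul, integral_const_mul]
      rfl
    rw [this]
    apply setIntegral_mono_on (dd_int Z)
      (((dd_int Y).const_mul 2).add (integrableOn_const (hs := Q_fin))) Q_meas
    intro x hx
    obtain ⟨y, hy, hxy⟩ := dd_att hne x
    have h1 := dd_le x (hZm y hy)
    have h2 := gidx_dist hm (hY.1 (hgm y hy).1) (hY.1 hy) (hgm y hy).2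
    have h3 := dist_triangle x y (g (f y))
    rw [dist_comm y] at h3
    rw [← hxy] at h3
    have h4 := pow_le_pow_left₀ (dd_nonneg _ _) (h1.trans h3) 2
    change dd Z x ^ 2 ≤ 2 * dd Y x ^ 2 + 6 * (1 / (m : ℝ)) ^ 2
    nlinarith [sq_nonneg (dd Y x - dist (g (f y)) y)]
  have hsum : ∑ y ∈ Y \ Z, (quantE (Y.erase y) - quantE Y) ≤ quantE Z - quantE Y := by
    rw [cost_sum]
    unfold quantE
    rw [← integral_sub (dd_int _) (dd_int _)]
    apply setIntegral_mono_on (cost_int _ _) ((dd_int _).sub (dd_int _)) Q_meas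
    intro x _
    apply phi_sum hne
    · have := pow_le_pow_left₀ (dd_nonneg _ _) (dd_anti hZne hZY x) 2
      change 0 ≤ dd Z x ^ 2 - dd Y x ^ 2
      linarith
    · intro y hy _
      rw [Finset.mem_sdiff] at hy
      have : Z ⊆ Y.erase y := fun z hz => Finset.mem_erase.mpr ⟨fun h => hy.2 (h ▸ hz), hZY hz⟩
      have := pow_le_pow_left₀ (dd_nonneg _ _) (dd_anti hZne this x) 2
      change _ ≤ dd Z x ^ 2 - dd Y x ^ 2
      linarith
  by_contra! hcon
  have h1 : (Y \ Z).card * (18 / (n * (m : ℝ) ^ 2)) ≤ ∑ y ∈ Y \ Z, (quantE (Y.erase y) - quantE Y) := by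
    rw [← nsmul_eq_mul]
    apply Finset.card_nsmul_le_sum
    intro y hy
    exact (hcon y (Finset.mem_sdiff.mp hy).1).le
  have hYZ : (Y \ Z).Nonempty := by
    rw [← Finset.card_pos]
    have : (0:ℝ) < (Y \ Z).card := by linarith
    exact_mod_cast this
  have h1 : (Y \ Z).card * (18 / (n * (m : ℝ) ^ 2)) < ∑ y ∈ Y \ Z, (quantE (Y.erase y) - quantE Y) := by
    rw [← nsmul_eq_mul, ← Finset.sum_const]
    exact Finset.sum_lt_sum_of_nonempty hYZ (fun y hy => hcon y (Finset.mem_sdiff.mp hy).1)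
  have h2 : 9 * (1 / (m : ℝ)) ^ 2 ≤ (Y \ Z).card * (18 / (n * (m : ℝ) ^ 2)) := by
    have : 9 * (1 / (m : ℝ)) ^ 2 = n / 2 * (18 / (n * (m : ℝ) ^ 2)) := by field_simp; norm_num
    rw [this]
    apply mul_le_mul_of_nonneg_right _ (by positivity)
    linarith
  linarith

lemma cover {n m : ℕ} (hm : 0 < m) (hn : 2 * (m + 1) ^ 3 ≤ n) {Y : Finset E3}
    (hY : IsMinimizer n Y) {z : E3} (hz : z ∈ Qcube) :
    dd Y z ^ 5 / 1024 ≤ 18 / (n * (m : ℝ) ^ 2) := by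
  have hn2 : 2 ≤ n := le_trans (by have : 0 < (m+1)^3 := by positivity
                                   omega) hn
  obtain ⟨y, hy, h⟩ := cheap hm hn hY
  rcases (dd_nonneg Y z).eq_or_lt with h0 | h0
  · rw [← h0]; simp; positivity
  · have := swap hY hn2 hy hz h0 ((dd_le z hy).trans (Q_dist hz (hY.1 hy))) le_rfl
    linarith

lemma hole {k : ℕ} {Y : Finset E3} (hne : Y.Nonempty) (hk : Y.card < (k + 1) ^ 3) :
    ∃ z ∈ Qcube, 1 / (2 * ((k : ℝ) + 1)) ≤ dd Y z := by
  have hk' : (0 : ℝ) < (k : ℝ) + 1 := by positivity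
  set P : (Fin 3 → Fin (k + 1)) → E3 :=
    fun a => WithLp.toLp 2 (fun j => (((a j : ℕ) : ℝ) + 1 / 2) / ((k : ℝ) + 1)) with hP
  by_contra! hcon
  have hPQ : ∀ a, P a ∈ Qcube := by
    intro a j
    have : ((a j : ℕ) : ℝ) ≤ k := by exact_mod_cast Nat.lt_succ_iff.mp (a j).2
    simp only [hP, Set.mem_Icc]
    exact ⟨by positivity, by rw [div_le_one hk']; linarith⟩
  have hex : ∀ a, ∃ y ∈ Y, dist (P a) y < 1 / (2 * ((k : ℝ) + 1)) := by
    intro a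
    obtain ⟨y, hy, h⟩ := dd_att hne (P a)
    exact ⟨y, hy, h ▸ hcon _ (hPQ a)⟩
  choose F hF hFd using hex
  have hinj : Function.Injective F := by
    intro a b hab
    funext j
    have h1 := (coord_le (P a) (F a) j).trans_lt (hFd a)
    have h2 := (coord_le (P b) (F b) j).trans_lt (hFd b)
    rw [← hab] at h2
    have h3 : |P a j - P b j| < 1 / ((k : ℝ) + 1) := by
      have e : 1 / ((k : ℝ) + 1) = 1 / (2 * ((k : ℝ) + 1)) + 1 / (2 * ((k : ℝ) + 1)) := by
        field_simp; norm_num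
      rw [e]
      rw [abs_lt] at *
      constructor <;> linarith [h1.1, h1.2, h2.1, h2.2]
    have h4 : P a j - P b j = (((a j : ℕ) : ℝ) - ((b j : ℕ) : ℝ)) / ((k : ℝ) + 1) := by
      simp only [hP]; ring
    rw [h4, abs_div, abs_of_pos hk', div_lt_div_iff_of_pos_right hk'] at h3
    have h5 : |((a j : ℕ) : ℤ) - ((b j : ℕ) : ℤ)| < 1 := by exact_mod_cast h3
    rw [Int.abs_lt_one_iff] at h5
    apply Fin.ext; omega
  have := Finset.card_le_card_of_injOn (s := Finset.univ) (t := Y) F (fun a _ => hF a) hinj.injOn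
  rw [Finset.card_univ, card_fun] at this
  omega

lemma const_bd : 19660800000 ≤ 6 * Gamma4 / (omega3 * Gamma5 ^ 3) := by
  have hpi := Real.pi_gt_three
  have hpi2 := Real.pi_lt_d2
  have ho1 : 4 ≤ omega3 := by unfold omega3; linarith
  have ho2 : omega3 ≤ 4.2 := by unfold omega3; linarith
  obtain ⟨s, hs⟩ : ∃ s : ℝ, s = Real.sqrt (1 + (2 ^ 4 * 3 ^ 3 : ℝ) / (5 ^ 2 * 10 ^ 3)) - 1 := ⟨_, rfl⟩
  have hs1 : s ≤ 0.0087 := by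
    rw [hs, sub_le_iff_le_add]
    apply Real.sqrt_le_iff.mpr
    norm_num
  have hs0 : 0 < s := by
    rw [hs, sub_pos]
    apply Real.lt_sqrt_of_sq_lt
    norm_num
  have hG1 : 0 < Gamma1 := by unfold Gamma1; positivity
  have hG1' : Gamma1 ≤ 1 / 40 := by
    unfold Gamma1
    have : ((2 / 5 : ℝ) ^ ((2 : ℝ) / 3)) ≤ 1 := Real.rpow_le_one (by norm_num) (by norm_num) (by norm_num)
    linarith
  have hG3 : 0 < Gamma3 := by
    unfold Gamma3
    have : 0 < omega3 := by linarith
    positivity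
  have hG3' : Gamma3 ≤ 1 / 2 := by
    have e : Gamma3 = (Gamma1 / omega3) ^ ((1 : ℝ) / 5) := by
      unfold Gamma3
      rw [Real.div_rpow hG1.le (by linarith), neg_div, Real.rpow_neg (by linarith)]
      ring
    have e2 : (1 / 2 : ℝ) = ((1 / 32 : ℝ)) ^ ((1 : ℝ) / 5) := by
      rw [show (1 / 32 : ℝ) = (1 / 2) ^ (5 : ℝ) by norm_num, ← Real.rpow_mul (by norm_num)]
      norm_num
    rw [e, e2]
    apply Real.rpow_le_rpow (by have : 0 < omega3 := by linarith
                                positivity) _ (by norm_num)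
    rw [div_le_iff₀ (by linarith)]
    linarith
  have hG5 : 0 < Gamma5 := by
    unfold Gamma5; rw [← hs]; positivity
  have hG5' : Gamma5 ≤ 0.0010875 := by
    unfold Gamma5; rw [← hs]
    nlinarith
  have hG4 : 60 ≤ Gamma4 := by
    unfold Gamma4; rw [← hs]
    have a1 : Real.pi ^ ((1 : ℝ) / 4) ≤ (12 : ℝ) ^ ((1 : ℝ) / 4) :=
      Real.rpow_le_rpow (by linarith) (by linarith) (by norm_num)
    have a2 : omega3 ^ ((1 : ℝ) / 12) ≤ (16 : ℝ) ^ ((1 : ℝ) / 3) := by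
      calc omega3 ^ ((1 : ℝ) / 12) ≤ (16 : ℝ) ^ ((1 : ℝ) / 12) :=
            Real.rpow_le_rpow (by linarith) (by linarith) (by norm_num)
        _ ≤ _ := Real.rpow_le_rpow_of_exponent_le (by norm_num) (by norm_num)
    have p1 : 0 < Real.pi ^ ((1 : ℝ) / 4) := by positivity
    have p2 : 0 < omega3 ^ ((1 : ℝ) / 12) := Real.rpow_pos_of_pos (by linarith) _
    have a3 : 2 ≤ 2 * (12 : ℝ) ^ ((1 : ℝ) / 4) * (16 : ℝ) ^ ((1 : ℝ) / 3) /
      (Real.pi ^ ((1 : ℝ) / 4) * omega3 ^ ((1 : ℝ) / 12)) := by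
      rw [le_div_iff₀ (by positivity)]
      have := mul_le_mul a1 a2 p2.le (by positivity)
      linarith
    have a4 : 10 ≤ s ^ (-(1 : ℝ) / 2) := by
      have e : (10 : ℝ) = (1 / 100 : ℝ) ^ (-(1 : ℝ) / 2) := by
        rw [show (1 / 100 : ℝ) = 10 ^ (-2 : ℝ) by norm_num [Real.rpow_neg], ← Real.rpow_mul (by norm_num)]
        norm_num
      rw [e]
      exact Real.rpow_le_rpow_of_nonpos hs0 (by linarith) (by norm_num)
    have a5 : 3 ≤ ((5 ^ 2 * 10 ^ 3 : ℝ) / (2 ^ 2 * 3 ^ 3)) ^ ((1 : ℝ) / 4) := by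
      have e : (3 : ℝ) = (81 : ℝ) ^ ((1 : ℝ) / 4) := by
        rw [show (81 : ℝ) = 3 ^ (4 : ℝ) by norm_num, ← Real.rpow_mul (by norm_num)]
        norm_num
      calc (3 : ℝ) = (81 : ℝ) ^ ((1 : ℝ) / 4) := e
        _ ≤ _ := Real.rpow_le_rpow (by norm_num) (by norm_num) (by norm_num)
    calc (60 : ℝ) = 2 * 10 * 3 := by norm_num
      _ ≤ _ := mul_le_mul (mul_le_mul a3 a4 (by norm_num) (by linarith)) a5 (by norm_num)
        (mul_nonneg (by linarith) (by linarith))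
  have h3 : Gamma5 ^ 3 ≤ 0.0010875 ^ 3 := pow_le_pow_left₀ hG5.le hG5' 3
  have h4 : omega3 * Gamma5 ^ 3 ≤ 4.2 * 0.0010875 ^ 3 :=
    mul_le_mul ho2 h3 (by positivity) (by norm_num)
  rw [le_div_iff₀ (by have : 0 < omega3 := by linarith
                      positivity)]
  norm_num at h4 ⊢
  linarith

lemma frontier_sub (a : E3) (L : ℝ) {x : E3}
    (hx : x ∈ frontier {x : E3 | ∀ i, x i ∈ Set.Icc (a i) (a i + L)}) :
    ∃ i, x i = a i ∨ x i = a i + L := by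
  have hc : IsClosed {x : E3 | ∀ i, x i ∈ Set.Icc (a i) (a i + L)} := by
    have : {x : E3 | ∀ i, x i ∈ Set.Icc (a i) (a i + L)} =
        ⋂ i, {x : E3 | x i ∈ Set.Icc (a i) (a i + L)} := by ext; simp
    rw [this]
    exact isClosed_iInter fun i => isClosed_Icc.preimage (by fun_prop : Continuous fun x : E3 => x i)
  rw [hc.frontier_eq] at hx
  by_contra! hcon
  apply hx.2
  rw [mem_interior]
  refine ⟨⋂ i, {x : E3 | x i ∈ Set.Ioo (a i) (a i + L)}, ?_, ?_, ?_⟩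
  · intro y hy i
    exact Set.Ioo_subset_Icc_self (Set.mem_iInter.mp hy i)
  · exact isOpen_iInter_of_finite fun i =>
      isOpen_Ioo.preimage (by fun_prop : Continuous fun x : E3 => x i)
  · refine Set.mem_iInter.mpr fun i => ?_
    have := hx.1 i
    exact ⟨lt_of_le_of_ne this.1 (hcon i).1.symm, lt_of_le_of_ne this.2 (hcon i).2⟩

open Classical in
lemma face {n : ℕ} {t : ℝ} (ht : 100 ≤ t) (htn : t ^ 3 = n) {Y : Finset E3}
    (hY : IsMinimizer n Y) (i : Fin 3) (c : ℝ) :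
    ((Y.filter (fun y => ∃ x ∈ vorCell Y y, x i = c)).card : ℝ) ≤ 3276800000 * t ^ 2 := by
  have ht0 : 0 < t := by linarith
  have hn2 : 2 ≤ n := by
    have : (2 : ℝ) ≤ n := by
      rw [← htn]
      have := pow_le_pow_left₀ (by norm_num) ht 3
      linarith
    exact_mod_cast this
  have hne : Y.Nonempty := by rw [← Finset.card_pos, hY.2.1]; omega
  obtain ⟨m, hm⟩ : ∃ m, m = ⌊0.78 * t⌋₊ := ⟨_, rfl⟩
  have hm1 : (m : ℝ) ≤ 0.78 * t := by rw [hm]; exact Nat.floor_le (by positivity)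
  have hm2 : 0.75 * t ≤ m := by
    have := Nat.lt_floor_add_one (0.78 * t)
    rw [← hm] at this; linarith
  have hm0 : 0 < m := by
    have : (0 : ℝ) < m := by linarith
    exact_mod_cast this
  have hmn : 2 * (m + 1) ^ 3 ≤ n := by
    have : 2 * ((m : ℝ) + 1) ^ 3 ≤ n := by
      have h := pow_le_pow_left₀ (by positivity) (by linarith : (m : ℝ) + 1 ≤ 0.79 * t) 3
      rw [← htn]
      have : 0 < t ^ 3 := by positivity
      nlinarith
    exact_mod_cast this
  have hcov : ∀ x ∈ Qcube, dd Y x ≤ 8 / t := by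
    intro x hx
    have h := cover hm0 hmn hY hx
    have h2 : 18 / (n * (m : ℝ) ^ 2) ≤ 18 / (t ^ 3 * (0.75 * t) ^ 2) := by
      rw [← htn]
      gcongr
    have h3 : dd Y x ^ 5 ≤ (8 / t) ^ 5 := by
      have : (8 / t) ^ 5 = 1024 * (18 / (t ^ 3 * (0.75 * t) ^ 2)) := by field_simp; norm_num
      rw [this]; linarith
    exact le_of_pow_le_pow_left₀ (by norm_num) (by positivity) h3
  obtain ⟨k, hk⟩ : ∃ k, k = ⌊t⌋₊ := ⟨_, rfl⟩
  have hk1 : (k : ℝ) ≤ t := by rw [hk]; exact Nat.floor_le ht0.le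
  have hk2 : t < k + 1 := by rw [hk]; exact Nat.lt_floor_add_one t
  have hkn : Y.card < (k + 1) ^ 3 := by
    rw [hY.2.1]
    have : (n : ℝ) < ((k : ℝ) + 1) ^ 3 := by
      rw [← htn]; exact pow_lt_pow_left₀ hk2 ht0.le (by norm_num)
    exact_mod_cast this
  obtain ⟨z, hz, hzd⟩ := hole hne hkn
  have hδ : 0.4 / t ≤ dd Y z := by
    refine le_trans ?_ hzd
    rw [div_le_div_iff₀ ht0 (by positivity)]
    linarith
  have hsw : ∀ y ∈ Y, quantE Y + (0.4 / t) ^ 5 / 1024 ≤ quantE (Y.erase y) := by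
    intro y hy
    apply swap hY hn2 hy hz (by positivity) _ hδ
    rw [div_le_iff₀ ht0]; linarith
  have := slab (S := Y.filter (fun y => ∃ x ∈ vorCell Y y, x i = c)) (c := c) (i := i) hY hn2
    (by positivity : 0 < 8 / t) (by rw [div_le_iff₀ ht0]; linarith) hcov (Finset.filter_subset _ _)
    hsw (by
      intro y hy
      rw [Finset.mem_filter] at hy
      obtain ⟨hyY, x, hx, hxc⟩ := hy
      obtain ⟨w, hw, hxw⟩ := dd_att hne x
      rw [← hxc, abs_sub_comm]
      refine (coord_le x y i).trans ((hx.2 w hw).trans ?_)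
      rw [← hxw]; exact hcov x hx.1)
  have e1 : (0.4 / t) ^ 5 / 1024 = 1 / (100000 * t ^ 5) := by field_simp; norm_num
  have e2 : 64 * (8 / t) ^ 3 = 3276800000 * t ^ 2 * (1 / (100000 * t ^ 5)) := by field_simp; norm_num
  rw [e1, e2] at this
  exact le_of_mul_le_mul_right this (by positivity)

theorem stmt_12 (Ω : Set E3) (a : E3) (L : ℝ) (hL : 0 < L)
    (hΩ : Ω = {x : E3 | ∀ i, x i ∈ Set.Icc (a i) (a i + L)}) (hΩQ : Ω ⊆ Qcube) :
    ∀ᶠ n : ℕ in Filter.atTop, ∀ Y : Finset E3, IsMinimizer n Y →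
      (({y : E3 | y ∈ Y ∧ (vorCell Y y ∩ frontier Ω).Nonempty}.ncard : ℝ)) ≤
        (6 * Gamma4 / (omega3 * Gamma5 ^ 3)) * (n : ℝ) ^ ((2 : ℝ) / 3) := by
  classical
  have hev : ∀ᶠ n : ℕ in Filter.atTop, 100 ≤ (n : ℝ) ^ ((1 : ℝ) / 3) :=
    ((tendsto_rpow_atTop (by norm_num : (0 : ℝ) < 1 / 3)).comp
      tendsto_natCast_atTop_atTop).eventually_ge_atTop 100
  filter_upwards [hev] with n hn Y hY
  obtain ⟨t, ht⟩ : ∃ t : ℝ, t = (n : ℝ) ^ ((1 : ℝ) / 3) := ⟨_, rfl⟩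
  rw [← ht] at hn
  have ht3 : t ^ 3 = n := by
    rw [ht, ← Real.rpow_natCast, ← Real.rpow_mul (by positivity)]; norm_num
  have ht2 : (n : ℝ) ^ ((2 : ℝ) / 3) = t ^ 2 := by
    rw [ht, ← Real.rpow_natCast, ← Real.rpow_mul (by positivity)]; norm_num
  rw [ht2]
  set A : Fin 3 → ℝ → Finset E3 := fun i c => Y.filter (fun y => ∃ x ∈ vorCell Y y, x i = c) with hA
  have hsub : {y : E3 | y ∈ Y ∧ (vorCell Y y ∩ frontier Ω).Nonempty} ⊆
      ((Finset.univ.biUnion (fun i => A i (a i) ∪ A i (a i + L)) : Finset E3) : Set E3) := by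
    rintro y ⟨hy, x, hxv, hxf⟩
    rw [hΩ] at hxf
    obtain ⟨i, hi⟩ := frontier_sub a L hxf
    rw [Finset.mem_coe, Finset.mem_biUnion]
    refine ⟨i, Finset.mem_univ _, ?_⟩
    rw [Finset.mem_union]
    rcases hi with hi | hi
    · left; exact Finset.mem_filter.mpr ⟨hy, x, hxv, hi⟩
    · right; exact Finset.mem_filter.mpr ⟨hy, x, hxv, hi⟩
  have h1 := Set.ncard_le_ncard hsub (Finset.finite_toSet _)
  rw [Set.ncard_coe_finset] at h1
  have h2 : ((Finset.univ.biUnion (fun i => A i (a i) ∪ A i (a i + L))).card : ℝ) ≤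
      19660800000 * t ^ 2 := by
    calc ((Finset.univ.biUnion (fun i => A i (a i) ∪ A i (a i + L))).card : ℝ)
        ≤ ((∑ i : Fin 3, (A i (a i) ∪ A i (a i + L)).card : ℕ) : ℝ) := by
          exact_mod_cast Finset.card_biUnion_le
      _ = ∑ i : Fin 3, ((A i (a i) ∪ A i (a i + L)).card : ℝ) := by push_cast; rfl
      _ ≤ ∑ i : Fin 3, (6553600000 * t ^ 2) := by
          apply Finset.sum_le_sum
          intro i _
          have u : ((A i (a i) ∪ A i (a i + L)).card : ℝ) ≤
              (A i (a i)).card + (A i (a i + L)).card := by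
            exact_mod_cast Finset.card_union_le _ _
          have f1 := face hn ht3 hY i (a i)
          have f2 := face hn ht3 hY i (a i + L)
          simp only [hA] at u ⊢
          linarith
      _ = _ := by simp; ring
  calc ({y : E3 | y ∈ Y ∧ (vorCell Y y ∩ frontier Ω).Nonempty}.ncard : ℝ)
      ≤ ((Finset.univ.biUnion (fun i => A i (a i) ∪ A i (a i + L))).card : ℝ) := by
        exact_mod_cast h1
    _ ≤ 19660800000 * t ^ 2 := h2
    _ ≤ _ := mul_le_mul_of_nonneg_right const_bd (by positivity)
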